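/- arXiv:2404.04859 — 2 statements merged into one kernel-verified Lean document; each statement's English description precedes it below -/
import Mathlib

section
/- Let (z₁, z₂) be a centered bivariate Gaussian with unit variances and correlation ρ. Then lim_{ε → ∞} E[ σ(ε a z₁) σ(ε b z₂) / ε² ] = ab · E[ z₁ z₂ (α 1_{z₁<0} + β 1_{z₁>0})(α 1_{z₂<0} + β 1_{z₂>0}) ], where σ is differentiable with σ(0)=0, |σ'| ≤ C, σ'(z) → α as z → −∞ and σ'(z) → β as z → +∞, and a, b > 0. -/
open MeasureTheory ProbabilityTheory Filter

/-- The centered bivariate Gaussian on `ℝ × ℝ` with unit variances and correlation `ρ`,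
realized as the law of `(u, ρ u + √(1-ρ²) v)` for independent standard Gaussians `u, v`. -/
noncomputable def biGaussian (ρ : ℝ) : Measure (ℝ × ℝ) :=
  Measure.map (fun p : ℝ × ℝ => (p.1, ρ * p.1 + Real.sqrt (1 - ρ ^ 2) * p.2))
    ((gaussianReal 0 1).prod (gaussianReal 0 1))

/-! A function whose derivative has limits `α` at `-∞` and `β` at `+∞` looks, seen from far away,
like `z ↦ z (α 1_{z<0} + β 1_{z>0})`: by the mean value inequality `σ z / z` has the same limits.
Hence `σ (ε a z₁) / ε` and `σ (ε b z₂) / ε` converge pointwise. As `|σ z| ≤ C |z|`, the product of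
the two is dominated by a multiple of `|z₁ z₂|`, which is integrable because Gaussian vectors have
second moments. -/

section AsymptoticSlope

variable {E : Type*} [NormedAddCommGroup E] [NormedSpace ℝ E] {f f' : ℝ → E} {L : E}

lemma isLittleO_id_atTop_of_hasDerivAt (hf : ∀ᶠ x in atTop, HasDerivAt f (f' x) x)
    (hf' : Tendsto f' atTop (nhds 0)) : f =o[atTop] (id : ℝ → ℝ) := by
  rw [Asymptotics.isLittleO_iff]
  intro c hc
  have hsmall : ∀ᶠ x in atTop, ‖f' x‖ ≤ c / 2 :=
    (hf'.norm.eventually_lt_const (by simpa using half_pos hc)).mono fun _ => le_of_lt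
  obtain ⟨M, hM⟩ := eventually_atTop.1 (hf.and (hsmall.and (eventually_ge_atTop 0)))
  have hM0 : 0 ≤ M := (hM M le_rfl).2.2
  have hconst : ∀ᶠ x : ℝ in atTop, ‖f M‖ ≤ c / 2 * ‖id x‖ :=
    (Asymptotics.isLittleO_const_id_atTop (f M)).def (half_pos hc)
  filter_upwards [hconst, eventually_ge_atTop M] with x hx hMx
  have hincr : ‖f x - f M‖ ≤ c / 2 * ‖x - M‖ :=
    (convex_Ici M).norm_image_sub_le_of_norm_hasDerivWithin_le
      (fun y hy => (hM y hy).1.hasDerivWithinAt) (fun y hy => (hM y hy).2.1)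
      Set.self_mem_Ici hMx
  have hsub : ‖x - M‖ ≤ ‖x‖ := by
    rw [Real.norm_of_nonneg (sub_nonneg.2 hMx), Real.norm_of_nonneg (hM0.trans hMx)]
    exact sub_le_self x hM0
  calc ‖f x‖ ≤ ‖f x - f M‖ + ‖f M‖ := norm_le_norm_sub_add _ _
    _ ≤ c / 2 * ‖x‖ + c / 2 * ‖x‖ := add_le_add (hincr.trans (by gcongr)) hx
    _ = c * ‖x‖ := by ring

lemma tendsto_inv_smul_atTop_of_hasDerivAt (hf : ∀ᶠ x in atTop, HasDerivAt f (f' x) x)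
    (hf' : Tendsto f' atTop (nhds L)) :
    Tendsto (fun x : ℝ => x⁻¹ • f x) atTop (nhds L) := by
  have hlin : (fun x => f x - x • L) =o[atTop] (id : ℝ → ℝ) := by
    refine isLittleO_id_atTop_of_hasDerivAt (f' := fun x => f' x - L) (hf.mono fun x hx => ?_)
      (by simpa using hf'.sub_const L)
    simpa using! hx.sub ((hasDerivAt_id x).smul_const L)
  have hlim := hlin.tendsto_inv_smul_nhds_zero.add_const L
  rw [zero_add] at hlim
  refine hlim.congr' ?_
  filter_upwards [eventually_ne_atTop 0] with x hx
  simp [smul_sub, hx]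

lemma tendsto_inv_smul_atBot_of_hasDerivAt (hf : ∀ᶠ x in atBot, HasDerivAt f (f' x) x)
    (hf' : Tendsto f' atBot (nhds L)) :
    Tendsto (fun x : ℝ => x⁻¹ • f x) atBot (nhds L) := by
  have hneg : Tendsto (fun x : ℝ => x⁻¹ • f (-x)) atTop (nhds (-L)) := by
    refine tendsto_inv_smul_atTop_of_hasDerivAt (f' := fun x => -f' (-x)) ?_
      (hf'.comp tendsto_neg_atTop_atBot).neg
    filter_upwards [tendsto_neg_atTop_atBot.eventually hf] with x hx
    simpa using! hx.scomp x (hasDerivAt_neg x)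
  simpa [Function.comp_def, inv_neg] using (hneg.comp tendsto_neg_atBot_atTop).neg

end AsymptoticSlope

section LinearGrowth

variable {σ : ℝ → ℝ} {C : ℝ}

lemma tendsto_div_atTop_of_tendsto_deriv {β : ℝ} (hσ : ∀ᶠ x in atTop, DifferentiableAt ℝ σ x)
    (hβ : Tendsto (deriv σ) atTop (nhds β)) : Tendsto (fun s => σ s / s) atTop (nhds β) := by
  simpa only [smul_eq_mul, div_eq_inv_mul] using
    tendsto_inv_smul_atTop_of_hasDerivAt (hσ.mono fun _ hx => hx.hasDerivAt) hβ

lemma tendsto_div_atBot_of_tendsto_deriv {α : ℝ} (hσ : ∀ᶠ x in atBot, DifferentiableAt ℝ σ x)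
    (hα : Tendsto (deriv σ) atBot (nhds α)) : Tendsto (fun s => σ s / s) atBot (nhds α) := by
  simpa only [smul_eq_mul, div_eq_inv_mul] using
    tendsto_inv_smul_atBot_of_hasDerivAt (hσ.mono fun _ hx => hx.hasDerivAt) hα

lemma abs_le_mul_abs_of_abs_deriv_le (h0 : σ 0 = 0) (hdiff : Differentiable ℝ σ)
    (hC : ∀ z, |deriv σ z| ≤ C) (s : ℝ) : |σ s| ≤ C * |s| := by
  simpa [h0] using convex_univ.norm_image_sub_le_of_norm_deriv_le
    (fun z _ => hdiff z) (fun z _ => hC z) (Set.mem_univ 0) (Set.mem_univ s)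

lemma abs_comp_mul_div_le (hσ : ∀ s, |σ s| ≤ C * |s|) {t : ℝ} (ht : t ≠ 0) (z : ℝ) :
    |σ (t * z) / t| ≤ C * |z| := by
  rw [abs_div, div_le_iff₀ (abs_pos.2 ht)]
  calc |σ (t * z)| ≤ C * |t * z| := hσ _
    _ = C * |z| * |t| := by rw [abs_mul]; ring

end LinearGrowth

section SignSlope

/-- The slope `α 1_{z<0} + β 1_{z>0}` that a function with slopes `α` at `-∞` and `β` at `+∞`
exhibits in the direction `z`; it is `0` at `z = 0`. -/
noncomputable def signSlope (α β z : ℝ) : ℝ :=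
  (if z < 0 then α else 0) + (if 0 < z then β else 0)

variable {σ : ℝ → ℝ} {α β : ℝ}

lemma signSlope_of_neg {z : ℝ} (hz : z < 0) : signSlope α β z = α := by
  simp [signSlope, hz, hz.le]

lemma signSlope_of_pos {z : ℝ} (hz : 0 < z) : signSlope α β z = β := by
  simp [signSlope, hz, hz.le]

lemma signSlope_mul_of_pos {a : ℝ} (ha : 0 < a) (z : ℝ) :
    signSlope α β (a * z) = signSlope α β z := by
  simp only [signSlope, ← smul_eq_mul, smul_neg_iff_of_pos_left ha, smul_pos_iff_of_pos_left ha]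

lemma tendsto_comp_mul_div_atTop (h0 : σ 0 = 0)
    (hα : Tendsto (fun s => σ s / s) atBot (nhds α))
    (hβ : Tendsto (fun s => σ s / s) atTop (nhds β)) (z : ℝ) :
    Tendsto (fun t => σ (t * z) / t) atTop (nhds (z * signSlope α β z)) := by
  rcases eq_or_ne z 0 with rfl | hz
  · simp [h0]
  have hslope : Tendsto (fun t => σ (t * z) / (t * z)) atTop (nhds (signSlope α β z)) := by
    rcases hz.lt_or_gt with hneg | hpos
    · rw [signSlope_of_neg hneg]
      exact hα.comp (tendsto_id.atTop_mul_const_of_neg hneg)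
    · rw [signSlope_of_pos hpos]
      exact hβ.comp (tendsto_id.atTop_mul_const hpos)
  refine (hslope.const_mul z).congr fun t => ?_
  rw [mul_comm t z, ← mul_div_assoc, mul_div_mul_left _ _ hz]

end SignSlope

instance isGaussian_biGaussian (ρ : ℝ) : IsGaussian (biGaussian ρ) :=
  isGaussian_map ((ContinuousLinearMap.fst ℝ ℝ ℝ).prod
    (ρ • ContinuousLinearMap.fst ℝ ℝ ℝ + √(1 - ρ ^ 2) • ContinuousLinearMap.snd ℝ ℝ ℝ))

lemma integrable_fst_mul_snd_of_isGaussian (μ : Measure (ℝ × ℝ)) [IsGaussian μ] :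
    Integrable (fun p => p.1 * p.2) μ :=
  (IsGaussian.memLp_dual μ (.fst ℝ ℝ ℝ) 2 (by simp)).integrable_mul
    (IsGaussian.memLp_dual μ (.snd ℝ ℝ ℝ) 2 (by simp))

theorem biGaussian_sigma_limit_general {Ω : Type*} {mΩ : MeasurableSpace Ω} {μ : Measure Ω}
    {X Y : Ω → ℝ} {σ τ : ℝ → ℝ} {C D α β γ δ a b : ℝ}
    (hX : AEMeasurable X μ) (hY : AEMeasurable Y μ) (hXY : Integrable (fun ω => X ω * Y ω) μ)
    (hσm : Measurable σ) (hσ : ∀ s, |σ s| ≤ C * |s|)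
    (hα : Tendsto (fun s => σ s / s) atBot (nhds α))
    (hβ : Tendsto (fun s => σ s / s) atTop (nhds β))
    (hτm : Measurable τ) (hτ : ∀ s, |τ s| ≤ D * |s|)
    (hγ : Tendsto (fun s => τ s / s) atBot (nhds γ))
    (hδ : Tendsto (fun s => τ s / s) atTop (nhds δ))
    (ha : 0 < a) (hb : 0 < b) :
    Tendsto (fun ε : ℝ => ∫ ω, σ (ε * a * X ω) * τ (ε * b * Y ω) / ε ^ 2 ∂μ) atTop
      (nhds (a * b * ∫ ω, X ω * Y ω * signSlope α β (X ω) * signSlope γ δ (Y ω) ∂μ)) := by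
  have hσ0 : σ 0 = 0 := by simpa using hσ 0
  have hτ0 : τ 0 = 0 := by simpa using hτ 0
  have hsplit (ε x y : ℝ) : σ (ε * a * x) * τ (ε * b * y) / ε ^ 2 =
      σ (ε * (a * x)) / ε * (τ (ε * (b * y)) / ε) := by
    rw [div_mul_div_comm, ← sq, mul_assoc, mul_assoc]
  simp only [hsplit]
  rw [← integral_const_mul]
  refine tendsto_integral_filter_of_dominated_convergence
    (fun ω => C * D * (|a| * |b|) * |X ω * Y ω|) (.of_forall fun ε => ?_) ?_
    (hXY.abs.const_mul _) (.of_forall fun ω => ?_)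
  · exact (((hσm.comp_aemeasurable ((hX.const_mul a).const_mul ε)).div_const ε).mul
      ((hτm.comp_aemeasurable ((hY.const_mul b).const_mul ε)).div_const ε)).aestronglyMeasurable
  · filter_upwards [eventually_ne_atTop 0] with ε hε
    refine .of_forall fun ω => ?_
    have hboundX := abs_comp_mul_div_le hσ hε (a * X ω)
    have hboundY := abs_comp_mul_div_le hτ hε (b * Y ω)
    rw [Real.norm_eq_abs, abs_mul]
    calc |σ (ε * (a * X ω)) / ε| * |τ (ε * (b * Y ω)) / ε|
      _ ≤ C * |a * X ω| * (D * |b * Y ω|) :=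
          mul_le_mul hboundX hboundY (abs_nonneg _) ((abs_nonneg _).trans hboundX)
      _ = C * D * (|a| * |b|) * |X ω * Y ω| := by simp only [abs_mul]; ring
  · have hlim := (tendsto_comp_mul_div_atTop hσ0 hα hβ (a * X ω)).mul
      (tendsto_comp_mul_div_atTop hτ0 hγ hδ (b * Y ω))
    rw [signSlope_mul_of_pos ha, signSlope_mul_of_pos hb] at hlim
    convert hlim using 2
    ring

/-- For a centered bivariate Gaussian with unit variances and correlation `ρ`, and `σ`
differentiable with `σ(0) = 0`, `|σ'| ≤ C`, `σ'(z) → α` at `-∞`, `σ'(z) → β` at `+∞`,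
and `a, b > 0`:
`lim_{ε → ∞} E[σ(εaz₁)σ(εbz₂)/ε²]
  = a b · E[z₁ z₂ (α 1_{z₁<0} + β 1_{z₁>0})(α 1_{z₂<0} + β 1_{z₂>0})]`. -/
theorem biGaussian_sigma_limit (σ : ℝ → ℝ) (C α β a b ρ : ℝ)
    (h0 : σ 0 = 0) (hdiff : Differentiable ℝ σ) (hC : ∀ z, |deriv σ z| ≤ C)
    (hα : Tendsto (deriv σ) atBot (nhds α)) (hβ : Tendsto (deriv σ) atTop (nhds β))
    (ha : 0 < a) (hb : 0 < b) (hρ : ρ ∈ Set.Icc (-1 : ℝ) 1) :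
    Tendsto (fun ε : ℝ => ∫ p, σ (ε * a * p.1) * σ (ε * b * p.2) / ε ^ 2 ∂(biGaussian ρ))
      atTop
      (nhds (a * b * ∫ p, p.1 * p.2 *
        ((if p.1 < 0 then α else 0) + (if 0 < p.1 then β else 0)) *
        ((if p.2 < 0 then α else 0) + (if 0 < p.2 then β else 0)) ∂(biGaussian ρ))) := by
  have hlin := abs_le_mul_abs_of_abs_deriv_le h0 hdiff hC
  have hbot := tendsto_div_atBot_of_tendsto_deriv (.of_forall hdiff) hα
  have htop := tendsto_div_atTop_of_tendsto_deriv (.of_forall hdiff) hβ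
  have hσm : Measurable σ := hdiff.continuous.measurable
  exact biGaussian_sigma_limit_general measurable_fst.aemeasurable measurable_snd.aemeasurable
    (integrable_fst_mul_snd_of_isGaussian _) hσm hlin hbot htop hσm hlin hbot htop ha hb
end

section
/- With the choice α = 0, β = √2 for the asymptotic slopes, the limiting kernel G_∞(z_i, z_j) := lim_{ε→∞} E_{w ~ N(0, I_d)} [σ(ε w·z_i) σ(ε w·z_j) / ε²] on unit vectors z_i, z_j ∈ ℝ^d equals (1/π)(⟨z_i, z_j⟩ (π − arccos⟨z_i, z_j⟩) + √(1 − ⟨z_i, z_j⟩²)). -/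
open MeasureTheory ProbabilityTheory Filter

/-!
Since `σ (ε s) / ε` tends to `b s⁺ - a s⁻`, where `a` and `b` are the slopes of `σ` at `-∞` and
`+∞`, dominated convergence reduces the limit to the expectations of `⟪±x, w⟫⁺ * ⟪±y, w⟫⁺`.
The pair `(⟪x, w⟫, ⟪y, w⟫)` has the law of the inner products of a standard Gaussian vector of the
plane with two vectors of lengths `‖x‖`, `‖y‖` at angle `θ = angle x y`. In polar coordinates the
expectation becomes `∫ cos⁺ φ * cos⁺ (φ - θ) dφ` up to a constant, and the product under this
integral is positive exactly on an interval of length `π - θ`.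
-/

open Asymptotics InnerProductGeometry
open scoped RealInnerProductSpace Real Topology

lemma posPart_mul_of_nonneg {R : Type*} [Ring R] [LinearOrder R] [IsOrderedRing R] {r : R}
    (hr : 0 ≤ r) (a : R) : (r * a)⁺ = r * a⁺ := by
  simp only [posPart_def, mul_max_of_nonneg _ _ hr, mul_zero]

section Plane

lemma integral_cos_mul_cos_sub (a b θ : ℝ) :
    ∫ φ in a..b, Real.cos φ * Real.cos (φ - θ) =
      ((b - a) * Real.cos θ + (Real.sin (2 * b - θ) - Real.sin (2 * a - θ)) / 2) / 2 := by
  have product_to_sum (φ : ℝ) :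
      Real.cos φ * Real.cos (φ - θ) = (Real.cos θ + Real.cos (2 * φ - θ)) / 2 := by
    have := Real.two_mul_cos_mul_cos φ (φ - θ)
    rw [sub_sub_cancel, ← add_sub_assoc, ← two_mul] at this
    linarith
  simp_rw [product_to_sum]
  rw [intervalIntegral.integral_div, intervalIntegral.integral_add (by simp)
    (Continuous.intervalIntegrable (by fun_prop) _ _), intervalIntegral.integral_const,
    intervalIntegral.integral_comp_mul_sub _ two_ne_zero, integral_cos, smul_eq_mul, smul_eq_mul]
  ring

lemma posPart_cos_mul_posPart_cos_sub {θ φ : ℝ} (hθ : θ ∈ Set.Icc 0 π) (hφ : φ ∈ Set.Ioo (-π) π) :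
    (Real.cos φ)⁺ * (Real.cos (φ - θ))⁺ = (Set.Ioc (θ - π / 2) (π / 2)).indicator
      (fun φ => Real.cos φ * Real.cos (φ - θ)) φ := by
  obtain ⟨hθ0, hθπ⟩ := hθ
  obtain ⟨hφl, hφr⟩ := hφ
  by_cases hr : π / 2 < φ
  · have : Real.cos φ ≤ 0 := Real.cos_nonpos_of_pi_div_two_le_of_le hr.le (by linarith)
    simp [posPart_of_nonpos this, hr]
  by_cases hl : φ ≤ θ - π / 2
  · rw [Set.indicator_of_notMem (by simp [hl]), mul_eq_zero, posPart_eq_zero, posPart_eq_zero,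
      ← Real.cos_neg (φ - θ), ← Real.cos_neg φ]
    rcases le_total φ (-(π / 2)) with h | h
    · exact .inl (Real.cos_nonpos_of_pi_div_two_le_of_le (by linarith) (by linarith))
    · exact .inr (Real.cos_nonpos_of_pi_div_two_le_of_le (by linarith) (by linarith))
  rw [not_lt] at hr
  rw [not_le] at hl
  rw [Set.indicator_of_mem (Set.mem_Ioc.mpr ⟨hl, hr⟩),
    posPart_of_nonneg (Real.cos_nonneg_of_neg_pi_div_two_le_of_le (by linarith) hr),
    posPart_of_nonneg (Real.cos_nonneg_of_neg_pi_div_two_le_of_le (by linarith) (by linarith))]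

lemma integral_posPart_cos_mul_posPart_cos_sub {θ : ℝ} (hθ : θ ∈ Set.Icc 0 π) :
    ∫ φ in Set.Ioo (-π) π, (Real.cos φ)⁺ * (Real.cos (φ - θ))⁺ =
      (Real.sin θ + (π - θ) * Real.cos θ) / 2 := by
  have hsub : Set.Ioc (θ - π / 2) (π / 2) ⊆ Set.Ioo (-π) π := fun φ hφ =>
    ⟨by linarith [hθ.1, hφ.1, Real.pi_pos], by linarith [hφ.2, Real.pi_pos]⟩
  have hr : Real.sin (2 * (π / 2) - θ) = Real.sin θ := by
    rw [mul_div_cancel₀ π two_ne_zero, Real.sin_pi_sub]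
  have hl : Real.sin (2 * (θ - π / 2) - θ) = -Real.sin θ := by
    rw [← Real.sin_sub_pi]
    congr 1
    ring
  rw [setIntegral_congr_fun measurableSet_Ioo fun φ => posPart_cos_mul_posPart_cos_sub hθ,
    setIntegral_indicator measurableSet_Ioc, Set.inter_eq_right.mpr hsub,
    ← intervalIntegral.integral_of_le (by linarith [hθ.2]), integral_cos_mul_cos_sub, hr, hl]
  ring

lemma integral_Ioi_rpow_add_one_mul_exp_neg_sq_div_two {s : ℝ} (hs : -2 < s) :
    ∫ r in Set.Ioi (0 : ℝ), r ^ (s + 1) * Real.exp (-r ^ 2 / 2) =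
      2 ^ (s / 2) * Real.Gamma (s / 2 + 1) := by
  have h := integral_rpow_mul_exp_neg_mul_rpow two_pos (show -1 < s + 1 by linarith)
    (one_half_pos (α := ℝ))
  have exponent : (s + 1 + 1) / 2 = s / 2 + 1 := by ring
  rw [neg_div, exponent, one_div, Real.rpow_neg (by norm_num), Real.inv_rpow two_pos.le, inv_inv,
    Real.rpow_add_one two_ne_zero, mul_inv_cancel_right₀ two_ne_zero] at h
  rw [← h]
  simp [div_eq_inv_mul]

variable {F : Type*} [NormedAddCommGroup F] [NormedSpace ℝ F]

lemma integral_gaussianReal_prod_eq_integral_polarCoord_symm (f : ℝ × ℝ → F) :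
    ∫ p, f p ∂((gaussianReal 0 1).prod (gaussianReal 0 1)) =
      ∫ p in polarCoord.target,
        (p.1 * ((2 * π)⁻¹ * Real.exp (-p.1 ^ 2 / 2))) • f (polarCoord.symm p) := by
  rw [gaussianReal_of_var_ne_zero _ one_ne_zero,
    prod_withDensity (measurable_gaussianPDF _ _) (measurable_gaussianPDF _ _),
    integral_withDensity_eq_integral_toReal_smul
      (by have := measurable_gaussianPDF 0 1; fun_prop)
      (ae_of_all _ fun p => ENNReal.mul_lt_top gaussianPDF_lt_top gaussianPDF_lt_top),
    ← Measure.volume_eq_prod, ← integral_comp_polarCoord_symm]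
  congr 1 with ⟨r, φ⟩
  rw [smul_smul]
  congr 2
  simp only [polarCoord_symm_apply, ENNReal.toReal_mul, toReal_gaussianPDF, gaussianPDFReal,
    NNReal.coe_one, mul_one, sub_zero]
  rw [mul_mul_mul_comm, ← Real.exp_add, ← mul_inv, Real.mul_self_sqrt (by positivity)]
  congr 2
  linear_combination (-r ^ 2 / 2) * Real.sin_sq_add_cos_sq φ

lemma integral_gaussianReal_prod_of_homogeneous {f : ℝ × ℝ → F} {s : ℝ} (hs : -2 < s)
    (hf : ∀ r : ℝ, 0 < r → ∀ p, f (r • p) = r ^ s • f p) :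
    ∫ p, f p ∂((gaussianReal 0 1).prod (gaussianReal 0 1)) =
      ((2 * π)⁻¹ * (2 ^ (s / 2) * Real.Gamma (s / 2 + 1))) •
        ∫ φ in Set.Ioo (-π) π, f (Real.cos φ, Real.sin φ) := by
  have separation : Set.EqOn
      (fun p => (p.1 * ((2 * π)⁻¹ * Real.exp (-p.1 ^ 2 / 2))) • f (polarCoord.symm p))
      (fun p => ((2 * π)⁻¹ * (p.1 ^ (s + 1) * Real.exp (-p.1 ^ 2 / 2))) •
        f (Real.cos p.2, Real.sin p.2)) polarCoord.target := by
    rintro ⟨r, φ⟩ ⟨hr : 0 < r, -⟩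
    have hpolar : polarCoord.symm (r, φ) = r • (Real.cos φ, Real.sin φ) := by simp
    simp only [hpolar, hf r hr, smul_smul, Real.rpow_add_one hr.ne']
    congr 1
    ring
  rw [integral_gaussianReal_prod_eq_integral_polarCoord_symm,
    setIntegral_congr_fun polarCoord.open_target.measurableSet separation, polarCoord_target,
    Measure.volume_eq_prod, ← Measure.prod_restrict,
    integral_prod_smul (fun r : ℝ => (2 * π)⁻¹ * (r ^ (s + 1) * Real.exp (-r ^ 2 / 2)))
      (fun φ => f (Real.cos φ, Real.sin φ)), integral_const_mul,
    integral_Ioi_rpow_add_one_mul_exp_neg_sq_div_two hs]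

lemma integral_gaussianReal_prod_posPart_mul_posPart {θ : ℝ} (hθ : θ ∈ Set.Icc 0 π) :
    ∫ p : ℝ × ℝ, p.1⁺ * (Real.cos θ * p.1 + Real.sin θ * p.2)⁺
        ∂((gaussianReal 0 1).prod (gaussianReal 0 1)) =
      (Real.sin θ + (π - θ) * Real.cos θ) / (2 * π) := by
  have hcos (φ : ℝ) : Real.cos θ * Real.cos φ + Real.sin θ * Real.sin φ = Real.cos (φ - θ) := by
    rw [Real.cos_sub]
    ring
  have hconst : (2 * π)⁻¹ * (2 ^ ((2 : ℝ) / 2) * Real.Gamma (2 / 2 + 1)) = π⁻¹ := by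
    rw [div_self two_ne_zero, one_add_one_eq_two, Real.Gamma_two, Real.rpow_one]
    field_simp
  rw [integral_gaussianReal_prod_of_homogeneous (s := 2) (by norm_num)]
  · simp only [hcos, integral_posPart_cos_mul_posPart_cos_sub hθ, hconst, smul_eq_mul]
    field_simp
  · intro r hr p
    simp only [Prod.smul_fst, Prod.smul_snd, smul_eq_mul, Real.rpow_two]
    rw [mul_left_comm (Real.cos θ), mul_left_comm (Real.sin θ), ← mul_add,
      posPart_mul_of_nonneg hr.le, posPart_mul_of_nonneg hr.le]
    ring

lemma charFunDual_gaussianReal_zero_one_prod (L : StrongDual ℝ (ℝ × ℝ)) :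
    charFunDual ((gaussianReal 0 1).prod (gaussianReal 0 1)) L =
      Complex.exp (-((L (1, 0) ^ 2 + L (0, 1) ^ 2 : ℝ) : ℂ) / 2) := by
  have one_dim (l : StrongDual ℝ ℝ) :
      charFunDual (gaussianReal 0 1) l = Complex.exp (-((l 1 ^ 2 : ℝ) : ℂ) / 2) := by
    simp [charFunDual_eq_charFun_map_one, gaussianReal_map_continuousLinearMap,
      charFun_gaussianReal, sq_nonneg, neg_div]
  rw [charFunDual_prod, one_dim, one_dim, ← Complex.exp_add]
  congr 1
  simp only [ContinuousLinearMap.comp_apply, ContinuousLinearMap.inl_apply,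
    ContinuousLinearMap.inr_apply, Complex.ofReal_add]
  ring

end Plane

section InnerProductSpace

variable {E : Type*} [NormedAddCommGroup E] [InnerProductSpace ℝ E]

lemma norm_smul_add_smul_sq_eq_angle (x y : E) (p q : ℝ) :
    ‖p • x + q • y‖ ^ 2 = (p * ‖x‖ + q * (‖y‖ * Real.cos (angle x y))) ^ 2 +
      (q * (‖y‖ * Real.sin (angle x y))) ^ 2 := by
  rw [norm_add_sq_real, norm_smul, norm_smul, real_inner_smul_left, real_inner_smul_right,
    ← cos_angle_mul_norm_mul_norm x y, mul_pow, mul_pow, Real.norm_eq_abs, Real.norm_eq_abs,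
    sq_abs, sq_abs]
  linear_combination -(q * ‖y‖) ^ 2 * Real.sin_sq_add_cos_sq (angle x y)

/-- The arc-cosine kernel of degree one of Cho and Saul. It is twice the second-moment kernel of the
ReLU features `w ↦ ⟪x, w⟫⁺` for a standard Gaussian weight `w`, so that it takes the value `‖x‖ ^ 2`
on the diagonal. -/
noncomputable def arcCosineKernel (x y : E) : ℝ :=
  ‖x‖ * ‖y‖ / π * (Real.sin (angle x y) + (π - angle x y) * Real.cos (angle x y))

lemma arcCosineKernel_neg_left (x y : E) :
    arcCosineKernel (-x) y = arcCosineKernel x y - ⟪x, y⟫ := by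
  rw [arcCosineKernel, arcCosineKernel, angle_neg_left, norm_neg, Real.sin_pi_sub, Real.cos_pi_sub,
    ← cos_angle_mul_norm_mul_norm x y]
  field_simp
  ring

lemma arcCosineKernel_comm (x y : E) : arcCosineKernel x y = arcCosineKernel y x := by
  rw [arcCosineKernel, arcCosineKernel, angle_comm, mul_comm ‖x‖]

lemma arcCosineKernel_neg_right (x y : E) :
    arcCosineKernel x (-y) = arcCosineKernel x y - ⟪x, y⟫ := by
  rw [arcCosineKernel_comm, arcCosineKernel_neg_left, arcCosineKernel_comm, real_inner_comm]

lemma arcCosineKernel_of_norm_eq_one {x y : E} (hx : ‖x‖ = 1) (hy : ‖y‖ = 1) :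
    arcCosineKernel x y =
      1 / π * (⟪x, y⟫ * (π - Real.arccos ⟪x, y⟫) + Real.sqrt (1 - ⟪x, y⟫ ^ 2)) := by
  have hcos : Real.cos (angle x y) = ⟪x, y⟫ := by simp [cos_angle, hx, hy]
  have hangle : angle x y = Real.arccos ⟪x, y⟫ := by simp [angle, hx, hy]
  rw [arcCosineKernel, hcos, hangle, Real.sin_arccos, hx, hy]
  ring

variable [FiniteDimensional ℝ E] [MeasurableSpace E] [BorelSpace E]

lemma map_inner_prodMk_inner_stdGaussian (x y : E) :
    (stdGaussian E).map (fun w => (⟪x, w⟫, ⟪y, w⟫)) =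
      ((gaussianReal 0 1).prod (gaussianReal 0 1)).map fun p =>
        (‖x‖ * p.1, ‖y‖ * (Real.cos (angle x y) * p.1 + Real.sin (angle x y) * p.2)) := by
  let fst := ContinuousLinearMap.fst ℝ ℝ ℝ
  let snd := ContinuousLinearMap.snd ℝ ℝ ℝ
  let A : E →L[ℝ] ℝ × ℝ := (innerSL ℝ x).prod (innerSL ℝ y)
  let B : ℝ × ℝ →L[ℝ] ℝ × ℝ := (‖x‖ • fst).prod
    (‖y‖ • (Real.cos (angle x y) • fst + Real.sin (angle x y) • snd))
  have hA : ⇑A = fun w => (⟪x, w⟫, ⟪y, w⟫) := rfl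
  have hB : ⇑B = fun p => (‖x‖ * p.1,
      ‖y‖ * (Real.cos (angle x y) * p.1 + Real.sin (angle x y) * p.2)) := rfl
  rw [← hA, ← hB]
  have := Measure.isProbabilityMeasure_map (μ := stdGaussian E) A.measurable.aemeasurable
  have := Measure.isProbabilityMeasure_map (μ := (gaussianReal 0 1).prod (gaussianReal 0 1))
    B.measurable.aemeasurable
  refine Measure.ext_of_charFunDual (funext fun L => ?_)
  have hL (s t : ℝ) : L (s, t) = L (1, 0) * s + L (0, 1) * t := by
    rw [mul_comm, mul_comm (L _) t, ← smul_eq_mul, ← smul_eq_mul, ← map_smul, ← map_smul,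
      ← map_add]
    simp
  have hLA : L ∘L A = innerSL ℝ (L (1, 0) • x + L (0, 1) • y) := by
    ext w
    simp [hA, hL ⟪x, w⟫]
  have hLB₁ : (L ∘L B) (1, 0) = L (1, 0) * ‖x‖ + L (0, 1) * (‖y‖ * Real.cos (angle x y)) := by
    simp [hB, hL ‖x‖]
  have hLB₂ : (L ∘L B) (0, 1) = L (0, 1) * (‖y‖ * Real.sin (angle x y)) := by
    simp [hB, hL 0 (‖y‖ * _)]
  rw [charFunDual_map, charFunDual_map, hLA, charFunDual_stdGaussian,
    charFunDual_gaussianReal_zero_one_prod, hLB₁, hLB₂, innerSL_apply_norm, ← Complex.ofReal_pow,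
    norm_smul_add_smul_sq_eq_angle]

lemma integral_posPart_inner_mul_posPart_inner_stdGaussian (x y : E) :
    ∫ w, ⟪x, w⟫⁺ * ⟪y, w⟫⁺ ∂(stdGaussian E) = arcCosineKernel x y / 2 := by
  let θ := angle x y
  have hmeas {ν : Measure (ℝ × ℝ)} :
      AEStronglyMeasurable (fun p : ℝ × ℝ => p.1⁺ * p.2⁺) ν :=
    Continuous.aestronglyMeasurable (by fun_prop)
  calc ∫ w, ⟪x, w⟫⁺ * ⟪y, w⟫⁺ ∂(stdGaussian E)
      = ∫ p, p.1⁺ * p.2⁺ ∂((stdGaussian E).map fun w => (⟪x, w⟫, ⟪y, w⟫)) :=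
        (integral_map (φ := fun w => (⟪x, w⟫, ⟪y, w⟫)) (by fun_prop) hmeas).symm
    _ = ∫ p : ℝ × ℝ, (‖x‖ * p.1)⁺ * (‖y‖ * (Real.cos θ * p.1 + Real.sin θ * p.2))⁺
          ∂((gaussianReal 0 1).prod (gaussianReal 0 1)) := by
        rw [map_inner_prodMk_inner_stdGaussian, integral_map (by fun_prop) hmeas]
    _ = ‖x‖ * ‖y‖ * ∫ p : ℝ × ℝ, p.1⁺ * (Real.cos θ * p.1 + Real.sin θ * p.2)⁺
          ∂((gaussianReal 0 1).prod (gaussianReal 0 1)) := by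
        simp only [posPart_mul_of_nonneg (norm_nonneg _), mul_mul_mul_comm ‖x‖,
          integral_const_mul]
    _ = arcCosineKernel x y / 2 := by
        rw [integral_gaussianReal_prod_posPart_mul_posPart ⟨angle_nonneg x y, angle_le_pi x y⟩,
          arcCosineKernel]
        field_simp

lemma memLp_inner_stdGaussian (x : E) {p : ENNReal} (hp : p ≠ ⊤) :
    MemLp (fun w => ⟪x, w⟫) p (stdGaussian E) :=
  IsGaussian.memLp_dual (stdGaussian E) (innerSL ℝ x) p hp

lemma integrable_posPart_inner_mul_posPart_inner_stdGaussian (x y : E) :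
    Integrable (fun w => ⟪x, w⟫⁺ * ⟪y, w⟫⁺) (stdGaussian E) := by
  refine ((memLp_inner_stdGaussian x ENNReal.ofNat_ne_top).integrable_mul
    (memLp_inner_stdGaussian y ENNReal.ofNat_ne_top) (p := 2) (q := 2)).mono
    (Continuous.aestronglyMeasurable (by fun_prop)) (ae_of_all _ fun w => ?_)
  simp only [Pi.mul_apply, norm_mul, Real.norm_eq_abs, abs_of_nonneg (posPart_nonneg _)]
  gcongr <;> exact sup_le (le_abs_self _) (abs_nonneg _)

lemma integral_slopes_inner_mul_slopes_inner_stdGaussian (a b : ℝ) (x y : E) :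
    ∫ w, (b * ⟪x, w⟫⁺ - a * ⟪x, w⟫⁻) * (b * ⟪y, w⟫⁺ - a * ⟪y, w⟫⁻) ∂(stdGaussian E) =
      (b - a) ^ 2 / 2 * arcCosineKernel x y + a * b * ⟪x, y⟫ := by
  have expand (w : E) :
      (b * ⟪x, w⟫⁺ - a * ⟪x, w⟫⁻) * (b * ⟪y, w⟫⁺ - a * ⟪y, w⟫⁻) =
        b ^ 2 * (⟪x, w⟫⁺ * ⟪y, w⟫⁺) - a * b * (⟪x, w⟫⁺ * ⟪-y, w⟫⁺)
          - a * b * (⟪-x, w⟫⁺ * ⟪y, w⟫⁺) + a ^ 2 * (⟪-x, w⟫⁺ * ⟪-y, w⟫⁺) := by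
    simp only [inner_neg_left, posPart_neg]
    ring
  have hint (c : ℝ) (x y : E) :
      Integrable (fun w => c * (⟪x, w⟫⁺ * ⟪y, w⟫⁺)) (stdGaussian E) :=
    (integrable_posPart_inner_mul_posPart_inner_stdGaussian x y).const_mul c
  simp_rw [expand]
  rw [integral_add (((hint _ _ _).sub' (hint _ _ _)).sub' (hint _ _ _)) (hint _ _ _),
    integral_sub ((hint _ _ _).sub' (hint _ _ _)) (hint _ _ _),
    integral_sub (hint _ _ _) (hint _ _ _)]
  simp only [integral_const_mul, integral_posPart_inner_mul_posPart_inner_stdGaussian,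
    arcCosineKernel_neg_left, arcCosineKernel_neg_right]
  rw [inner_neg_left]
  ring

end InnerProductSpace

section AsymptoticSlopes

lemma exists_norm_le_mul_one_add_norm {X Y : Type*} [SeminormedAddCommGroup X]
    [SeminormedAddCommGroup Y] {f : X → Y} (hf : Continuous f) (hO : f =O[cocompact X] id) :
    ∃ A, 0 ≤ A ∧ ∀ x, ‖f x‖ ≤ A * (1 + ‖x‖) := by
  obtain ⟨B, hB0, hB⟩ := hO.exists_nonneg
  obtain ⟨K, hK, hKB⟩ := mem_cocompact.mp hB.bound
  obtain ⟨M, hM⟩ := hK.exists_bound_of_continuousOn hf.continuousOn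
  refine ⟨max B M, hB0.trans (le_max_left _ _), fun x => ?_⟩
  by_cases hx : x ∈ K
  · nlinarith [hM x hx, le_max_left B M, le_max_right B M, norm_nonneg x]
  · have : ‖f x‖ ≤ B * ‖x‖ := hKB hx
    nlinarith [le_max_left B M, norm_nonneg x]

variable {σ : ℝ → ℝ} {a b : ℝ}

lemma isBigO_cocompact_of_tendsto_div (hneg : Tendsto (fun s => σ s / s) atBot (𝓝 a))
    (hpos : Tendsto (fun s => σ s / s) atTop (𝓝 b)) : σ =O[cocompact ℝ] id := by
  rw [cocompact_eq_atBot_atTop, isBigO_sup]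
  constructor
  · refine isBigO_of_div_tendsto_nhds ?_ a hneg
    filter_upwards [eventually_lt_atBot 0] with s hs h using absurd h hs.ne
  · refine isBigO_of_div_tendsto_nhds ?_ b hpos
    filter_upwards [eventually_gt_atTop 0] with s hs h using absurd h hs.ne'

lemma tendsto_comp_mul_div_atTop_s10 (hneg : Tendsto (fun s => σ s / s) atBot (𝓝 a))
    (hpos : Tendsto (fun s => σ s / s) atTop (𝓝 b)) (s : ℝ) :
    Tendsto (fun ε => σ (ε * s) / ε) atTop (𝓝 (b * s⁺ - a * s⁻)) := by
  have cancel (hs : s ≠ 0) (ε : ℝ) : σ (ε * s) / (ε * s) * s = σ (ε * s) / ε := by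
    rw [div_mul_eq_div_div, div_mul_cancel₀ _ hs]
  rcases lt_trichotomy s 0 with hs | rfl | hs
  · rw [posPart_of_nonpos hs.le, negPart_of_nonpos hs.le, mul_zero, zero_sub, mul_neg, neg_neg]
    exact ((hneg.comp (tendsto_id.atTop_mul_const_of_neg hs)).mul_const s).congr (cancel hs.ne)
  · simpa using tendsto_const_nhds.div_atTop (a := σ 0) tendsto_id
  · rw [posPart_of_nonneg hs.le, negPart_of_nonneg hs.le, mul_zero, sub_zero]
    exact ((hpos.comp (tendsto_id.atTop_mul_const hs)).mul_const s).congr (cancel hs.ne')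

lemma abs_comp_mul_div_le_s10 {A : ℝ} (hA : 0 ≤ A) (hσ : ∀ s, |σ s| ≤ A * (1 + |s|)) {ε : ℝ}
    (hε : 1 ≤ ε) (s : ℝ) : |σ (ε * s) / ε| ≤ A * (1 + |s|) := by
  have hε0 : 0 < ε := one_pos.trans_le hε
  rw [abs_div, abs_of_pos hε0, div_le_iff₀ hε0]
  calc |σ (ε * s)| ≤ A * (1 + ε * |s|) := by
        simpa only [abs_mul, abs_of_pos hε0] using hσ (ε * s)
    _ ≤ A * (ε + ε * |s|) := by gcongr
    _ = A * (1 + |s|) * ε := by ring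

lemma tendsto_integral_comp_mul_mul_comp_mul_div_sq {Ω : Type*} [MeasurableSpace Ω]
    {μ : Measure Ω} [IsFiniteMeasure μ] (hσ : Continuous σ)
    (hneg : Tendsto (fun s => σ s / s) atBot (𝓝 a))
    (hpos : Tendsto (fun s => σ s / s) atTop (𝓝 b)) {f g : Ω → ℝ} (hf : MemLp f 2 μ)
    (hg : MemLp g 2 μ) :
    Tendsto (fun ε => ∫ ω, σ (ε * f ω) * σ (ε * g ω) / ε ^ 2 ∂μ) atTop
      (𝓝 (∫ ω, (b * (f ω)⁺ - a * (f ω)⁻) * (b * (g ω)⁺ - a * (g ω)⁻) ∂μ)) := by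
  obtain ⟨A, hA, hgrowth⟩ :=
    exists_norm_le_mul_one_add_norm hσ (isBigO_cocompact_of_tendsto_div hneg hpos)
  have factor (ε s t : ℝ) : σ (ε * s) * σ (ε * t) / ε ^ 2 = σ (ε * s) / ε * (σ (ε * t) / ε) := by
    rw [div_mul_div_comm, sq]
  simp_rw [factor]
  refine tendsto_integral_filter_of_dominated_convergence
    (fun ω => A * (1 + |f ω|) * (A * (1 + |g ω|))) ?_ ?_ ?_ ?_
  · have hcomp (ε : ℝ) {h : Ω → ℝ} (hh : MemLp h 2 μ) :
        AEStronglyMeasurable (fun ω => σ (ε * h ω) / ε) μ :=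
      (show Continuous fun s => σ (ε * s) / ε by fun_prop).comp_aestronglyMeasurable hh.1
    exact .of_forall fun ε => (hcomp ε hf).mul (hcomp ε hg)
  · filter_upwards [eventually_ge_atTop 1] with ε hε
    refine ae_of_all _ fun ω => ?_
    rw [norm_mul]
    exact mul_le_mul (abs_comp_mul_div_le_s10 hA hgrowth hε _) (abs_comp_mul_div_le_s10 hA hgrowth hε _)
      (norm_nonneg _) (by positivity)
  · have hL2 {h : Ω → ℝ} (hh : MemLp h 2 μ) : MemLp (fun ω => A * (1 + |h ω|)) 2 μ :=
      MemLp.const_mul (f := fun ω => 1 + |h ω|) ((memLp_const (1 : ℝ)).add hh.norm) A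
    exact (hL2 hf).integrable_mul (hL2 hg)
  · exact ae_of_all _ fun ω => (tendsto_comp_mul_div_atTop_s10 hneg hpos (f ω)).mul
      (tendsto_comp_mul_div_atTop_s10 hneg hpos (g ω))

end AsymptoticSlopes

theorem limiting_kernel_arccos_general {E : Type*} [NormedAddCommGroup E] [InnerProductSpace ℝ E]
    [FiniteDimensional ℝ E] [MeasurableSpace E] [BorelSpace E] {σ : ℝ → ℝ} {a b : ℝ}
    (hσ : Continuous σ) (hneg : Tendsto (fun s => σ s / s) atBot (𝓝 a))
    (hpos : Tendsto (fun s => σ s / s) atTop (𝓝 b)) (x y : E) :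
    Tendsto (fun ε => ∫ w, σ (ε * ⟪x, w⟫) * σ (ε * ⟪y, w⟫) / ε ^ 2 ∂(stdGaussian E)) atTop
      (𝓝 ((b - a) ^ 2 / 2 * arcCosineKernel x y + a * b * ⟪x, y⟫)) := by
  rw [← integral_slopes_inner_mul_slopes_inner_stdGaussian]
  exact tendsto_integral_comp_mul_mul_comp_mul_div_sq hσ hneg hpos
    (memLp_inner_stdGaussian x ENNReal.ofNat_ne_top)
    (memLp_inner_stdGaussian y ENNReal.ofNat_ne_top)

lemma integral_stdGaussian_euclideanSpace {ι F : Type*} [Fintype ι] [NormedAddCommGroup F]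
    [NormedSpace ℝ F] (f : EuclideanSpace ℝ ι → F) :
    ∫ w, f w ∂(stdGaussian (EuclideanSpace ℝ ι)) =
      ∫ w, f (WithLp.toLp 2 w) ∂(Measure.pi fun _ : ι => gaussianReal 0 1) := by
  rw [← map_pi_eq_stdGaussian]
  exact integral_map_equiv (MeasurableEquiv.toLp 2 (ι → ℝ)) f

/-- With asymptotic slopes `α = 0`, `β = √2`, the limiting kernel
`G_∞(z_i, z_j) = lim_{ε→∞} E_{w ~ N(0, I_d)}[σ(ε w·z_i) σ(ε w·z_j)/ε²]` on unit vectors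
equals the ReLU arc-cosine kernel
`(1/π)(⟨z_i, z_j⟩(π − arccos⟨z_i, z_j⟩) + √(1 − ⟨z_i, z_j⟩²))`. -/
theorem limiting_kernel_arccos {d : ℕ} (σ : ℝ → ℝ) (C : NNReal)
    (h0 : σ 0 = 0) (hlip : LipschitzWith C σ)
    (hneg : Tendsto (fun s => σ s / s) atBot (nhds 0))
    (hpos : Tendsto (fun s => σ s / s) atTop (nhds (Real.sqrt 2)))
    (zi zj : Fin d → ℝ) (hzi : ∑ k, zi k ^ 2 = 1) (hzj : ∑ k, zj k ^ 2 = 1) :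
    Tendsto (fun ε : ℝ =>
        ∫ w, σ (ε * ∑ k, w k * zi k) * σ (ε * ∑ k, w k * zj k) / ε ^ 2
          ∂(Measure.pi fun _ : Fin d => gaussianReal 0 1)) atTop
      (nhds ((1 / Real.pi) * ((∑ k, zi k * zj k) *
          (Real.pi - Real.arccos (∑ k, zi k * zj k))
        + Real.sqrt (1 - (∑ k, zi k * zj k) ^ 2)))) := by
  have hnorm {z : Fin d → ℝ} (hz : ∑ k, z k ^ 2 = 1) : ‖WithLp.toLp 2 z‖ = 1 := by
    simp [EuclideanSpace.norm_eq, hz]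
  have hinner (z w : Fin d → ℝ) : ⟪WithLp.toLp 2 z, WithLp.toLp 2 w⟫ = ∑ k, w k * z k := by
    simp [PiLp.inner_apply]
  simpa [integral_stdGaussian_euclideanSpace, hinner, mul_comm (zj _),
      arcCosineKernel_of_norm_eq_one (hnorm hzi) (hnorm hzj)] using
    limiting_kernel_arccos_general hlip.continuous hneg hpos (WithLp.toLp 2 zi) (WithLp.toLp 2 zj)
end
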